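/- arXiv:1309.4620 — 3 statements merged into one kernel-verified Lean document; each statement's English description precedes it below -/
import Mathlib

section
/- Let A be a reduced Noetherian commutative ring whose integral closure Ā in Q(A) is a finite A-module, let J ⊆ A be a radical ideal containing a non-zerodivisor, and let W ⊆ Spec(A). Then n(A,J) ≥ n(A_P, J_P) for every P ∈ W, where J_P denotes the localized ideal in A_P. Moreover, if V(J) ⊆ W or if the non-normal locus N(A) is contained in W, then n(A,J) = max over P ∈ W of n(A_P, J_P). -/
set_option synthInstance.maxHeartbeats 1000000
set_option maxHeartbeats 1000000

open scoped nonZeroDivisors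

noncomputable section

/-- Given an intermediate ring `B` with `A ⊆ B ⊆ Q(A)` and an ideal `I` of `B`, the
endomorphism ring `End_B(I) = {x ∈ Q(A) : x·I ⊆ I}`, as a subalgebra of `Q(A)`. -/
def endStep (A : Type*) [CommRing A] (B : Subalgebra A (FractionRing A))
    (I : Ideal B) : Subalgebra A (FractionRing A) where
  carrier := {x : FractionRing A | ∀ j ∈ I,
    x * (j : FractionRing A) ∈ (fun b : B => (b : FractionRing A)) '' I}
  mul_mem' := by
    intro x y hx hy j hj
    obtain ⟨j', hj', heq⟩ := hy j hj
    rw [mul_assoc, ← heq]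
    exact hx j' hj'
  one_mem' := by
    intro j hj
    exact ⟨j, hj, (one_mul _).symm⟩
  add_mem' := by
    intro x y hx hy j hj
    obtain ⟨j1, hj1, h1⟩ := hx j hj
    obtain ⟨j2, hj2, h2⟩ := hy j hj
    refine ⟨j1 + j2, I.add_mem hj1 hj2, ?_⟩
    push_cast
    rw [add_mul, ← h1, ← h2]
  zero_mem' := by
    intro j hj
    exact ⟨0, I.zero_mem, by push_cast; rw [zero_mul]⟩
  algebraMap_mem' := by
    intro a j hj
    refine ⟨algebraMap A B a * j, I.mul_mem_left _ hj, ?_⟩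
    push_cast
    rfl

/-- The Grauert–Remmert normalization chain inside `Q(A)`:
`A_0 = A` (the image of `A` in `Q(A)`), and
`A_{i+1} = End_{A_i}(√(J·A_i))`. -/
def chainRing (A : Type*) [CommRing A] (J : Ideal A) :
    ℕ → Subalgebra A (FractionRing A)
  | 0 => ⊥
  | n + 1 =>
      endStep A (chainRing A J n)
        ((J.map (algebraMap A (chainRing A J n))).radical)

/-- The number of steps of the Grauert–Remmert-type normalization algorithm:
the least `n` with `A_n = A_{n+1}`. -/
def nSteps (A : Type*) [CommRing A] (J : Ideal A) : ℕ :=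
  sInf {n | chainRing A J n = chainRing A J (n + 1)}

/-- The non-normal locus of `A`. -/
def nonNormalLocus (A : Type*) [CommRing A] : Set (PrimeSpectrum A) :=
  {P | integralClosure (Localization.AtPrime P.asIdeal)
      (FractionRing (Localization.AtPrime P.asIdeal)) ≠ ⊥}

/-!
Every step of the chain is an ideal quotient `A_{i+1} = (J_i : J_i)` inside `Q(A)`. If `g ∈ J` is a
non-zerodivisor, then `g · A_{i+1} ⊆ J_i`, so all `A_i` and `J_i` are finite over a Noetherian `A`;
radicals, and quotients by finitely generated modules containing a unit, commute with localization,
whence `(A_i)_P` is the `i`-th ring of the chain of `(A_P, J_P)`. An equality `A_i = A_{i+1}` can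
thus be tested prime by prime. At a prime outside `V(J)` the chain is constant because `J_P = A_P`,
and at a prime outside `N(A)` because it lies between `A_P` and its integral closure.
-/

section ExtendedRadical

variable {A K : Type*} [CommRing A] [CommRing K] [Algebra A K]

/-- The radical `√(J·R)` of the extension of an ideal `J` of `A` to a subalgebra `R` of `K`. It is
an ideal of `R`, here viewed as an `A`-submodule of the fixed ambient algebra `K`, so that the
radicals for different `R` can be compared. -/
def extendedRadical (J : Ideal A) (R : Subalgebra A K) : Submodule A K :=
  ((J.map (algebraMap A R)).radical.restrictScalars A).map R.val.toLinearMap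

variable {J : Ideal A} {R : Subalgebra A K}

theorem coe_mem_smul_toSubmodule_iff {b : R} :
    (b : K) ∈ J • Subalgebra.toSubmodule R ↔ b ∈ J.map (algebraMap A R) := by
  have smul_eq_map : J • Subalgebra.toSubmodule R =
      ((J.map (algebraMap A R)).restrictScalars A).map R.val.toLinearMap := by
    rw [← Ideal.smul_top_eq_map, Submodule.map_smul'', Submodule.map_top]
    exact congrArg (J • ·) (Submodule.range_subtype (Subalgebra.toSubmodule R)).symm
  rw [smul_eq_map]
  exact Function.Injective.mem_set_image Subtype.val_injective

theorem mem_extendedRadical {y : K} :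
    y ∈ extendedRadical J R ↔ y ∈ R ∧ ∃ k : ℕ, y ^ k ∈ J • Subalgebra.toSubmodule R := by
  constructor
  · rintro ⟨b, ⟨k, hk⟩, rfl⟩
    exact ⟨b.2, k, coe_mem_smul_toSubmodule_iff.2 hk⟩
  · rintro ⟨hy, k, hk⟩
    exact ⟨⟨y, hy⟩, ⟨k, coe_mem_smul_toSubmodule_iff.1 hk⟩, rfl⟩

theorem extendedRadical_le : extendedRadical J R ≤ Subalgebra.toSubmodule R :=
  fun _ hy => (mem_extendedRadical.1 hy).1

theorem algebraMap_mem_extendedRadical {a : A} (ha : a ∈ J) :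
    algebraMap A K a ∈ extendedRadical J R :=
  ⟨algebraMap A R a, Ideal.le_radical (Ideal.mem_map_of_mem _ ha), rfl⟩

theorem smul_mem_extendedRadical {t : A} {y : K} {k : ℕ} (hy : y ∈ R)
    (h : t • y ^ k ∈ J • Subalgebra.toSubmodule R) : t • y ∈ extendedRadical J R := by
  let b : R := ⟨y, hy⟩
  have hb : t • b ^ k ∈ J.map (algebraMap A R) := coe_mem_smul_toSubmodule_iff.1 h
  refine ⟨t • b, ⟨k + 1, ?_⟩, rfl⟩
  have pow_eq : (t • b) ^ (k + 1) = (t ^ k • b) * (t • b ^ k) := by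
    rw [smul_pow, smul_mul_smul_comm, ← pow_succ, ← pow_succ']
  exact pow_eq ▸ Ideal.mul_mem_left _ _ hb

end ExtendedRadical

section FiniteGeneration

variable {A : Type*} [CommRing A]

theorem fg_div_of_isUnit_mem {K : Type*} [CommRing K] [Algebra A K] [IsNoetherianRing A]
    {I N : Submodule A K} (hI : I.FG) {u : K} (hu : IsUnit u) (huN : u ∈ N) : (I / N).FG := by
  have map_le : (I / N).map (LinearMap.mulRight A u) ≤ I := by
    rintro _ ⟨x, hx, rfl⟩
    exact hx u huN
  exact Submodule.fg_of_fg_map_injective _ hu.mul_left_injective (hI.of_le map_le)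

theorem exists_mem_forall_smul_mem_of_fg {M : Type*} [AddCommGroup M] [Module A M]
    {S : Submonoid A} {N P : Submodule A M} (hN : N.FG) (h : ∀ y ∈ N, ∃ s ∈ S, s • y ∈ P) :
    ∃ s ∈ S, ∀ y ∈ N, s • y ∈ P := by
  induction N, hN using Submodule.fg_induction with
  | singleton y =>
    obtain ⟨s, hs, hsy⟩ := h y (Submodule.mem_span_singleton_self y)
    refine ⟨s, hs, fun z hz => ?_⟩
    obtain ⟨a, rfl⟩ := Submodule.mem_span_singleton.1 hz
    rw [smul_comm]
    exact P.smul_mem a hsy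
  | sup N₁ N₂ _ _ ih₁ ih₂ =>
    obtain ⟨s, hs, hsN₁⟩ := ih₁ fun y hy => h y (Submodule.mem_sup_left hy)
    obtain ⟨t, ht, htN₂⟩ := ih₂ fun y hy => h y (Submodule.mem_sup_right hy)
    refine ⟨s * t, S.mul_mem hs ht, fun y hy => ?_⟩
    obtain ⟨y₁, hy₁, y₂, hy₂, rfl⟩ := Submodule.mem_sup.1 hy
    rw [smul_add]
    refine P.add_mem ?_ ?_
    · rw [mul_comm, mul_smul]
      exact P.smul_mem t (hsN₁ y₁ hy₁)
    · rw [mul_smul]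
      exact P.smul_mem s (htN₂ y₂ hy₂)

end FiniteGeneration

section LocalizedSubmodules

theorem span_image_div_le {A B K K' : Type*} [CommRing A] [CommRing B] [CommRing K] [Algebra A K]
    [CommRing K'] [Algebra A K'] [Algebra B K'] (φ : K →ₐ[A] K') (I N : Submodule A K) :
    Submodule.span B (φ '' (I / N : Submodule A K)) ≤
      Submodule.span B (φ '' I) / Submodule.span B (φ '' N) := by
  rw [Submodule.le_div_iff_mul_le, Submodule.span_mul_span]
  refine Submodule.span_mono ?_
  rintro _ ⟨_, ⟨x, hx, rfl⟩, _, ⟨y, hy, rfl⟩, rfl⟩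
  exact ⟨x * y, hx y hy, map_mul φ x y⟩

variable {A B : Type*} [CommRing A] [CommRing B] [Algebra A B]

section Module

variable {M M' : Type*} [AddCommGroup M] [Module A M] [AddCommGroup M'] [Module A M']
  [Module B M'] [IsScalarTower A B M'] {F : Type*} [FunLike F M M'] [LinearMapClass F A M M']

theorem span_image_smul (J : Ideal A) (f : F) (N : Submodule A M) :
    Submodule.span B (f '' (J • N : Submodule A M)) =
      J.map (algebraMap A B) • Submodule.span B (f '' N) := by
  apply le_antisymm
  · refine Submodule.span_le.2 (Set.image_subset_iff.2 fun z hz => ?_)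
    induction hz using Submodule.smul_induction_on' with
    | smul a ha y hy =>
      rw [Set.mem_preimage, map_smul, ← algebraMap_smul B a]
      exact Submodule.smul_mem_smul (Ideal.mem_map_of_mem _ ha)
        (Submodule.subset_span ⟨y, hy, rfl⟩)
    | add y _ z _ hy hz =>
      rw [Set.mem_preimage, map_add]
      exact Submodule.add_mem _ hy hz
  · rw [Ideal.map, Submodule.span_smul_span, Submodule.span_le]
    rintro _ ⟨_, ⟨a, ha, rfl⟩, _, ⟨y, hy, rfl⟩, rfl⟩
    simp only [algebraMap_smul, ← map_smul]
    exact Submodule.subset_span ⟨a • y, Submodule.smul_mem_smul ha hy, rfl⟩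

variable (S : Submonoid A) [IsLocalization S B]

theorem mem_span_image_iff {f : F} {N : Submodule A M} {y' : M'} :
    y' ∈ Submodule.span B (f '' N) ↔ ∃ s ∈ S, ∃ y ∈ N, s • y' = f y := by
  constructor
  · intro hy'
    obtain ⟨z, hz, s, rfl⟩ := (IsLocalization.mem_span_iff S).1 hy'
    have span_eq : Submodule.span A (f '' N) = N.map (f : M →ₗ[A] M') :=
      Submodule.span_eq (N.map (f : M →ₗ[A] M'))
    obtain ⟨y, hy, rfl⟩ := span_eq ▸ hz
    refine ⟨s, s.2, y, hy, ?_⟩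
    rw [← algebraMap_smul B (s : A), smul_smul, IsLocalization.mk'_spec', map_one, one_smul]
    rfl
  · rintro ⟨s, hs, y, hy, e⟩
    refine (IsLocalization.smul_mem_iff (s := (⟨s, hs⟩ : S))).1 ?_
    exact e ▸ Submodule.subset_span ⟨y, hy, rfl⟩

theorem map_mem_span_image_iff {f : F} (hf : ∀ x, f x = 0 → ∃ s ∈ S, s • x = 0)
    {N : Submodule A M} {x : M} :
    f x ∈ Submodule.span B (f '' N) ↔ ∃ s ∈ S, s • x ∈ N := by
  rw [mem_span_image_iff S]
  constructor
  · rintro ⟨s, hs, y, hy, e⟩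
    obtain ⟨w, hw, hwxy⟩ := hf (s • x - y) (by rw [map_sub, map_smul, e, sub_self])
    rw [smul_sub, sub_eq_zero] at hwxy
    refine ⟨w * s, S.mul_mem hw hs, ?_⟩
    rw [mul_smul, hwxy]
    exact N.smul_mem w hy
  · rintro ⟨s, hs, hsx⟩
    exact ⟨s, hs, s • x, hsx, (map_smul f s x).symm⟩

end Module

section Algebra

variable {K K' : Type*} [CommRing K] [Algebra A K] [CommRing K'] [Algebra A K'] [Algebra B K']
  [IsScalarTower A B K'] (S : Submonoid A) [IsLocalization S B] {φ : K →ₐ[A] K'}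

theorem extendedRadical_map_eq_span_image (hφ : ∀ x, φ x = 0 → ∃ s ∈ S, s • x = 0) (J : Ideal A)
    {R : Subalgebra A K} {R' : Subalgebra B K'}
    (hR : Subalgebra.toSubmodule R' = Submodule.span B (φ '' R)) :
    extendedRadical (J.map (algebraMap A B)) R' =
      Submodule.span B (φ '' extendedRadical J R) := by
  have smul_eq : J.map (algebraMap A B) • Subalgebra.toSubmodule R' =
      Submodule.span B (φ '' (J • Subalgebra.toSubmodule R : Submodule A K)) := by
    rw [hR, span_image_smul, Subalgebra.coe_toSubmodule]
  apply le_antisymm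
  · intro y' hy'
    obtain ⟨hy'R, k, hk⟩ := mem_extendedRadical.1 hy'
    obtain ⟨s, hs, y, hy, e⟩ := (mem_span_image_iff S (N := Subalgebra.toSubmodule R)).1
      (hR.le hy'R)
    have pow_mem : φ (y ^ k) ∈
        Submodule.span B (φ '' (J • Subalgebra.toSubmodule R : Submodule A K)) := by
      rw [map_pow, ← e, smul_pow, ← smul_eq]
      exact Submodule.smul_of_tower_mem _ _ hk
    obtain ⟨t, ht, hty⟩ := (map_mem_span_image_iff S hφ).1 pow_mem
    refine (mem_span_image_iff S).2
      ⟨t * s, S.mul_mem ht hs, t • y, smul_mem_extendedRadical hy hty, ?_⟩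
    rw [mul_smul, e, map_smul]
  · refine Submodule.span_le.2 ?_
    rintro _ ⟨y, hy, rfl⟩
    obtain ⟨hyR, k, hk⟩ := mem_extendedRadical.1 hy
    refine mem_extendedRadical.2 ⟨?_, k, ?_⟩
    · rw [← Subalgebra.mem_toSubmodule, hR]
      exact Submodule.subset_span ⟨y, hyR, rfl⟩
    · rw [smul_eq, ← map_pow]
      exact Submodule.subset_span ⟨y ^ k, hk, rfl⟩

theorem span_image_div (hφ : ∀ x, φ x = 0 → ∃ s ∈ S, s • x = 0) {I N : Submodule A K}
    (hN : N.FG) {u : K} (hu : IsUnit u) (huN : u ∈ N) :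
    Submodule.span B (φ '' (I / N : Submodule A K)) =
      Submodule.span B (φ '' I) / Submodule.span B (φ '' N) := by
  refine le_antisymm (span_image_div_le φ I N) fun x' hx' => ?_
  -- Multiplying by the unit `u ∈ N` moves `x'` into `B·φ(I)`, so up to `S` it comes from `K`.
  obtain ⟨s, hs, x, hx⟩ : ∃ s ∈ S, ∃ x, s • x' = φ x := by
    have mul_mem := hx' (φ u) (Submodule.subset_span ⟨u, huN, rfl⟩)
    obtain ⟨s, hs, j, -, e⟩ := (mem_span_image_iff S).1 mul_mem
    obtain ⟨x, rfl⟩ := hu.dvd (a := j)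
    refine ⟨s, hs, x, (hu.map φ).mul_right_cancel ?_⟩
    rw [smul_mul_assoc, e, map_mul, mul_comm]
  have exists_smul_mem : ∀ z ∈ N.map (LinearMap.mulLeft A x), ∃ t ∈ S, t • z ∈ I := by
    rintro _ ⟨y, hy, rfl⟩
    refine (map_mem_span_image_iff (B := B) S hφ).1 ?_
    rw [LinearMap.mulLeft_apply, map_mul, ← hx, smul_mul_assoc]
    exact Submodule.smul_of_tower_mem _ s (hx' (φ y) (Submodule.subset_span ⟨y, hy, rfl⟩))
  obtain ⟨t, ht, htI⟩ := exists_mem_forall_smul_mem_of_fg (hN.map _) exists_smul_mem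
  refine (mem_span_image_iff S).2 ⟨t * s, S.mul_mem ht hs, t • x, fun y hy => ?_, ?_⟩
  · rw [smul_mul_assoc]
    exact htI (x * y) ⟨y, hy, rfl⟩
  · rw [mul_smul, hx, map_smul]

end Algebra

end LocalizedSubmodules

section FractionRingMap

variable {A : Type*} [CommRing A] (S : Submonoid A) (B : Type*) [CommRing B] [Algebra A B]
  [IsLocalization S B]

/-- The canonical map `Q(A) → Q(B)` of total rings of fractions for a localization `B = S⁻¹A`. It
exists because a non-zerodivisor of `A` stays one in `B`; when `S` contains zero divisors it need
not be injective. -/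
def fractionRingMap : FractionRing A →ₐ[A] FractionRing B :=
  IsLocalization.liftAlgHom (M := A⁰) (f := Algebra.ofId A (FractionRing B)) fun a => by
    rw [Algebra.ofId_apply, IsScalarTower.algebraMap_apply A B]
    exact IsLocalization.map_units (FractionRing B)
      (⟨_, IsLocalization.nonZeroDivisors_le_comap S B a.2⟩ : B⁰)

theorem exists_smul_eq_zero_of_fractionRingMap_eq_zero (x : FractionRing A)
    (hx : fractionRingMap S B x = 0) : ∃ s ∈ S, s • x = 0 := by
  obtain ⟨⟨a, q⟩, h⟩ := IsLocalization.surj A⁰ x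
  have ha : algebraMap A B a = 0 := by
    apply IsFractionRing.injective B (FractionRing B)
    rw [← IsScalarTower.algebraMap_apply, ← (fractionRingMap S B).commutes, ← h, map_mul, hx,
      zero_mul, map_zero]
  obtain ⟨s, hs⟩ := (IsLocalization.map_eq_zero_iff S B a).1 ha
  refine ⟨s, s.2, (IsLocalization.map_units (FractionRing A) q).mul_right_cancel ?_⟩
  rw [smul_mul_assoc, h, Algebra.smul_def, ← map_mul, hs, map_zero, zero_mul]

end FractionRingMap

section Chain

variable {A : Type*} [CommRing A] {J : Ideal A}

theorem toSubmodule_chainRing_succ (J : Ideal A) (n : ℕ) :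
    Subalgebra.toSubmodule (chainRing A J (n + 1)) =
      extendedRadical J (chainRing A J n) / extendedRadical J (chainRing A J n) := by
  ext x
  constructor
  · rintro hx _ ⟨b, hb, rfl⟩
    exact hx b hb
  · exact fun hx j hj => hx j ⟨j, hj, rfl⟩

theorem chainRing_le_succ (J : Ideal A) (n : ℕ) : chainRing A J n ≤ chainRing A J (n + 1) :=
  fun x hx j hj => ⟨⟨x, hx⟩ * j, Ideal.mul_mem_left _ _ hj, rfl⟩

theorem chainRing_eq_succ_of_le {m n : ℕ} (h : chainRing A J m = chainRing A J (m + 1))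
    (hmn : m ≤ n) : chainRing A J n = chainRing A J (n + 1) := by
  induction n, hmn using Nat.le_induction with
  | base => exact h
  | succ n _ ih => exact congrArg (fun R => endStep A R (J.map (algebraMap A R)).radical) ih

theorem chainRing_top_one : chainRing A ⊤ 1 = ⊥ := by
  rw [eq_bot_iff]
  intro x hx
  have one_mem : (1 : FractionRing A) ∈ extendedRadical ⊤ (chainRing A ⊤ 0) := by
    simpa using algebraMap_mem_extendedRadical (R := chainRing A ⊤ 0)
      (Submodule.mem_top (x := (1 : A)))
  have mul_one_mem := (toSubmodule_chainRing_succ ⊤ 0).le hx 1 one_mem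
  exact extendedRadical_le (mul_one x ▸ mul_one_mem)

theorem exists_isUnit_mem_extendedRadical (hJ : ∃ g ∈ J, g ∈ A⁰)
    (R : Subalgebra A (FractionRing A)) : ∃ u ∈ extendedRadical J R, IsUnit u := by
  obtain ⟨g, hgJ, hg⟩ := hJ
  exact ⟨_, algebraMap_mem_extendedRadical hgJ,
    IsLocalization.map_units (FractionRing A) (⟨g, hg⟩ : A⁰)⟩

section Noetherian

variable [IsNoetherianRing A]

theorem chainRing_fg (hJ : ∃ g ∈ J, g ∈ A⁰) (n : ℕ) :
    (Subalgebra.toSubmodule (chainRing A J n)).FG := by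
  induction n with
  | zero => exact Subalgebra.fg_bot_toSubmodule
  | succ n ih =>
    obtain ⟨u, hu, hu_unit⟩ := exists_isUnit_mem_extendedRadical hJ (chainRing A J n)
    rw [toSubmodule_chainRing_succ]
    exact fg_div_of_isUnit_mem (ih.of_le extendedRadical_le) hu_unit hu

theorem chainRing_le_integralClosure (hJ : ∃ g ∈ J, g ∈ A⁰) (n : ℕ) :
    chainRing A J n ≤ integralClosure A (FractionRing A) :=
  fun x hx => IsIntegral.of_mem_of_fg _ (chainRing_fg hJ n) x hx

theorem exists_chainRing_eq_succ [Module.Finite A (integralClosure A (FractionRing A))]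
    (hJ : ∃ g ∈ J, g ∈ A⁰) : ∃ n, chainRing A J n = chainRing A J (n + 1) := by
  let C := Subalgebra.toSubmodule (integralClosure A (FractionRing A))
  have : IsNoetherian A C := isNoetherian_of_isNoetherianRing_of_finite A
    (integralClosure A (FractionRing A))
  let chain : ℕ →o Submodule A C :=
    ⟨fun n => (Subalgebra.toSubmodule (chainRing A J n)).submoduleOf C,
      monotone_nat_of_le_succ fun n _ hx => chainRing_le_succ J n hx⟩
  obtain ⟨n, hn⟩ := monotone_stabilizes_iff_noetherian.2 this chain
  refine ⟨n, le_antisymm (chainRing_le_succ J n) fun x hx => ?_⟩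
  exact (hn (n + 1) n.le_succ).ge
    (show (⟨x, chainRing_le_integralClosure hJ _ hx⟩ : C) ∈ chain (n + 1) from hx)

section Localization

variable (B : Type*) [CommRing B] [Algebra A B]

theorem toSubmodule_chainRing_map (S : Submonoid A) [IsLocalization S B]
    (hJ : ∃ g ∈ J, g ∈ A⁰) (n : ℕ) :
    Subalgebra.toSubmodule (chainRing B (J.map (algebraMap A B)) n) =
      Submodule.span B (fractionRingMap S B '' chainRing A J n) := by
  have hφ := exists_smul_eq_zero_of_fractionRingMap_eq_zero S B
  induction n with
  | zero =>
    change Subalgebra.toSubmodule ⊥ = Submodule.span B (fractionRingMap S B ''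
      (Subalgebra.toSubmodule (⊥ : Subalgebra A (FractionRing A))))
    rw [Algebra.toSubmodule_bot, Algebra.toSubmodule_bot, Submodule.one_eq_span,
      Submodule.one_eq_span, ← AlgHom.coe_toLinearMap, ← Submodule.map_coe, Submodule.map_span,
      Submodule.span_span_of_tower, Set.image_singleton, AlgHom.toLinearMap_apply, map_one]
  | succ n ih =>
    obtain ⟨u, hu, hu_unit⟩ := exists_isUnit_mem_extendedRadical hJ (chainRing A J n)
    have radical_fg := (chainRing_fg hJ n).of_le (extendedRadical_le (J := J))
    rw [toSubmodule_chainRing_succ, extendedRadical_map_eq_span_image S hφ J ih,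
      ← span_image_div S hφ radical_fg hu_unit hu, ← toSubmodule_chainRing_succ,
      Subalgebra.coe_toSubmodule]

theorem chainRing_map_eq_of_eq (S : Submonoid A) [IsLocalization S B]
    (hJ : ∃ g ∈ J, g ∈ A⁰) {m n : ℕ}
    (h : chainRing A J m = chainRing A J n) :
    chainRing B (J.map (algebraMap A B)) m = chainRing B (J.map (algebraMap A B)) n := by
  apply Subalgebra.toSubmodule_injective
  rw [toSubmodule_chainRing_map B S hJ, h, ← toSubmodule_chainRing_map B S hJ]

theorem exists_smul_mem_chainRing (S : Submonoid A) [IsLocalization S B]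
    (hJ : ∃ g ∈ J, g ∈ A⁰) {m n : ℕ}
    (h : chainRing B (J.map (algebraMap A B)) m ≤ chainRing B (J.map (algebraMap A B)) n)
    {x : FractionRing A} (hx : x ∈ chainRing A J m) : ∃ s ∈ S, s • x ∈ chainRing A J n := by
  have hφ := exists_smul_eq_zero_of_fractionRingMap_eq_zero S B
  have map_mem : fractionRingMap S B x ∈
      Subalgebra.toSubmodule (chainRing B (J.map (algebraMap A B)) m) := by
    rw [toSubmodule_chainRing_map B S hJ]
    exact Submodule.subset_span ⟨x, hx, rfl⟩
  refine (map_mem_span_image_iff (B := B) S hφ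
    (N := Subalgebra.toSubmodule (chainRing A J n))).1 ?_
  exact (toSubmodule_chainRing_map B S hJ n).le (h map_mem)

end Localization

theorem chainRing_le_of_forall_localization_le (hJ : ∃ g ∈ J, g ∈ A⁰) {m n : ℕ}
    (h : ∀ P : PrimeSpectrum A,
      chainRing (Localization.AtPrime P.asIdeal)
          (J.map (algebraMap A (Localization.AtPrime P.asIdeal))) m ≤
        chainRing (Localization.AtPrime P.asIdeal)
          (J.map (algebraMap A (Localization.AtPrime P.asIdeal))) n) :
    chainRing A J m ≤ chainRing A J n := by
  intro x hx
  let I : Ideal A := (Subalgebra.toSubmodule (chainRing A J n)).colon {x}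
  suffices I = ⊤ from Set.singleton_subset_iff.1 (Submodule.colon_eq_top_iff_subset _ |>.1 this)
  by_contra hI
  obtain ⟨P, hP, hIP⟩ := Ideal.exists_le_maximal I hI
  obtain ⟨s, hs, hsx⟩ := exists_smul_mem_chainRing (Localization.AtPrime P) P.primeCompl hJ
    (h ⟨P, hP.isPrime⟩) hx
  exact hs (hIP (Submodule.mem_colon_singleton.2 hsx))

end Noetherian

end Chain

section Steps

variable {A : Type*} [CommRing A] {J : Ideal A}

theorem nSteps_le_iff (hstab : ∃ n, chainRing A J n = chainRing A J (n + 1)) {n : ℕ} :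
    nSteps A J ≤ n ↔ chainRing A J n = chainRing A J (n + 1) :=
  ⟨chainRing_eq_succ_of_le (Nat.sInf_mem hstab), fun h => Nat.sInf_le h⟩

theorem nSteps_top : nSteps A ⊤ = 0 :=
  Nat.le_zero.1 (Nat.sInf_le chainRing_top_one.symm)

variable [IsNoetherianRing A]

theorem nSteps_eq_zero_of_integralClosure_eq_bot (hJ : ∃ g ∈ J, g ∈ A⁰)
    (h : integralClosure A (FractionRing A) = ⊥) : nSteps A J = 0 :=
  Nat.le_zero.1 <| Nat.sInf_le <| Eq.symm <| le_bot_iff.1 <|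
    h ▸ chainRing_le_integralClosure hJ 1

theorem nSteps_atPrime_eq_zero (hJ : ∃ g ∈ J, g ∈ A⁰) {P : PrimeSpectrum A}
    (hP : P ∉ PrimeSpectrum.zeroLocus (J : Set A) ∨ P ∉ nonNormalLocus A) :
    nSteps (Localization.AtPrime P.asIdeal)
      (J.map (algebraMap A (Localization.AtPrime P.asIdeal))) = 0 := by
  rcases hP with hP | hP
  · rw [IsLocalization.AtPrime.map_eq_top_of_not_le _ hP, nSteps_top]
  · obtain ⟨g, hgJ, hg⟩ := hJ
    refine nSteps_eq_zero_of_integralClosure_eq_bot ⟨_, Ideal.mem_map_of_mem _ hgJ, ?_⟩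
      (not_not.1 hP)
    exact IsLocalization.nonZeroDivisors_le_comap P.asIdeal.primeCompl _ hg

end Steps

theorem nSteps_localization_general
    (A : Type*) [CommRing A] [IsNoetherianRing A] (J : Ideal A) (hnzd : ∃ g ∈ J, g ∈ A⁰)
    (hstab : ∃ n, chainRing A J n = chainRing A J (n + 1)) (W : Set (PrimeSpectrum A)) :
    (∀ P ∈ W,
        nSteps (Localization.AtPrime P.asIdeal)
            (J.map (algebraMap A (Localization.AtPrime P.asIdeal)))
          ≤ nSteps A J) ∧
      ((PrimeSpectrum.zeroLocus (J : Set A) ⊆ W ∨ nonNormalLocus A ⊆ W) →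
        nSteps A J = sSup {m : ℕ | ∃ P ∈ W,
          m = nSteps (Localization.AtPrime P.asIdeal)
                (J.map (algebraMap A (Localization.AtPrime P.asIdeal)))}) := by
  have local_stable (P : PrimeSpectrum A) :=
    chainRing_map_eq_of_eq (Localization.AtPrime P.asIdeal) P.asIdeal.primeCompl hnzd
      ((nSteps_le_iff hstab).1 le_rfl)
  have local_le (P : PrimeSpectrum A) := (nSteps_le_iff ⟨_, local_stable P⟩).2 (local_stable P)
  refine ⟨fun P _ => local_le P, fun hW => le_antisymm ?_ (csSup_le' ?_)⟩
  · refine (nSteps_le_iff hstab).2 (le_antisymm (chainRing_le_succ J _) ?_)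
    refine chainRing_le_of_forall_localization_le hnzd fun P => ?_
    refine ((nSteps_le_iff ⟨_, local_stable P⟩).1 ?_).ge
    by_cases hP : P ∈ W
    · exact le_csSup ⟨nSteps A J, by rintro _ ⟨Q, -, rfl⟩; exact local_le Q⟩ ⟨P, hP, rfl⟩
    · exact (nSteps_atPrime_eq_zero hnzd (hW.imp (fun h hJ => hP (h hJ)) fun h hN => hP (h hN))
        ).trans_le (Nat.zero_le _)
  · rintro _ ⟨P, -, rfl⟩
    exact local_le P

/-- Let `A` be a reduced Noetherian ring with finite normalization,
`J ⊆ A` a radical ideal containing a non-zerodivisor, and `W ⊆ Spec A`. Then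
`n(A,J) ≥ n(A_P, J_P)` for every `P ∈ W`; moreover if `V(J) ⊆ W` or `N(A) ⊆ W`, then
`n(A,J) = max_{P ∈ W} n(A_P, J_P)`. -/
theorem nSteps_localization
    (A : Type*) [CommRing A] [IsReduced A] [IsNoetherianRing A]
    [Module.Finite A (integralClosure A (FractionRing A))]
    (J : Ideal A) (hrad : J.IsRadical) (hnzd : ∃ g ∈ J, g ∈ A⁰)
    (W : Set (PrimeSpectrum A)) :
    (∀ P ∈ W,
        nSteps (Localization.AtPrime P.asIdeal)
            (J.map (algebraMap A (Localization.AtPrime P.asIdeal)))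
          ≤ nSteps A J) ∧
      ((PrimeSpectrum.zeroLocus (J : Set A) ⊆ W ∨ nonNormalLocus A ⊆ W) →
        nSteps A J = sSup {m : ℕ | ∃ P ∈ W,
          m = nSteps (Localization.AtPrime P.asIdeal)
                (J.map (algebraMap A (Localization.AtPrime P.asIdeal)))}) :=
  nSteps_localization_general A J hnzd (exists_chainRing_eq_succ hnzd) W
end
end

section
/- Let A be a reduced Noetherian commutative ring satisfying Serre's condition (S_2), and let J ⊆ A be a radical ideal containing a non-zerodivisor of A. Then the ring End_A(J) = {x ∈ Q(A) : x·J ⊆ J} ⊆ Q(A) satisfies Serre's condition (S_2). -/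
set_option synthInstance.maxHeartbeats 1000000
set_option maxHeartbeats 1000000

open scoped nonZeroDivisors

noncomputable section

/-- For an ideal `J ⊆ A`, the endomorphism ring
`End_A(J) = {x ∈ Q(A) : x·J ⊆ J}` as a subalgebra of `Q(A)`. -/
def endIdeal (A : Type*) [CommRing A] (J : Ideal A) :
    Subalgebra A (FractionRing A) where
  carrier := {x : FractionRing A | ∀ j ∈ J,
    x * algebraMap A (FractionRing A) j ∈ algebraMap A (FractionRing A) '' J}
  mul_mem' := by
    intro x y hx hy j hj
    obtain ⟨j', hj', heq⟩ := hy j hj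
    rw [mul_assoc, ← heq]
    exact hx j' hj'
  one_mem' := by
    intro j hj
    exact ⟨j, hj, (one_mul _).symm⟩
  add_mem' := by
    intro x y hx hy j hj
    obtain ⟨j1, hj1, h1⟩ := hx j hj
    obtain ⟨j2, hj2, h2⟩ := hy j hj
    refine ⟨j1 + j2, J.add_mem hj1 hj2, ?_⟩
    rw [map_add, add_mul, ← h1, ← h2]
  zero_mem' := by
    intro j hj
    exact ⟨0, J.zero_mem, by rw [map_zero, zero_mul]⟩
  algebraMap_mem' := by
    intro a j hj
    exact ⟨a * j, J.mul_mem_left a hj, by rw [map_mul]⟩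

/-- Serre's condition `(S₂)`: for every prime `P`, `depth A_P ≥ min (2, dim A_P)`,
expressed by the existence of regular sequences in the maximal ideal of `A_P` of
length `min (2, dim A_P)`. -/
def SerreS2 (A : Type*) [CommRing A] : Prop :=
  ∀ P : PrimeSpectrum A, ∀ n : ℕ, n ≤ 2 →
    (n : WithBot ℕ∞) ≤ ringKrullDim (Localization.AtPrime P.asIdeal) →
    ∃ rs : List (Localization.AtPrime P.asIdeal), rs.length = n ∧
      (∀ r ∈ rs, r ∈ IsLocalRing.maximalIdeal (Localization.AtPrime P.asIdeal)) ∧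
      RingTheory.Sequence.IsRegular (Localization.AtPrime P.asIdeal) rs

/-!
Write `K = Q(A)` and `B = End_A(J)`. If `depth A_p ≥ 2`, then `p` is not associated to the
`A`-module `K ⧸ A`, and the point is that it is not associated to `K ⧸ B` either. Suppose that
`p = (B : z)`. Since `p z J ⊆ A` and `J` is finitely generated, multiplying `z` by an element
outside `p` achieves `z J ⊆ A`. Let `j ∈ J` and `a = z j`. From `p a z = (p z j) z ⊆ J z ⊆ A` one
gets `t a z ∈ A ⊆ B` for some `t ∉ p`, so `t a ∈ p`, that is, `a ∈ p` and `a z ∈ B`. Hence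
`a ^ 2 = (a z) j ∈ J`, so `a ∈ J` as `J` is radical. Thus `z J ⊆ J`, contradicting `z ∉ B`.

A prime `q` of `B` lies over a prime `p` of `A` of at least the same height. If this is positive,
`p` contains a non-zerodivisor `x` of `A`, because the associated primes of `A` have height zero,
and `x` is regular on `B_q`. If moreover `q` has height at least two, it is not associated to
`B ⧸ x B`: otherwise `p` would be associated to `B ⧸ x B ≃ x⁻¹ B ⧸ B ⊆ K ⧸ B`. So `depth B_q ≥ 2`.
-/

open IsLocalRing RingTheory.Sequence

section AssociatedPrimes

open scoped Pointwise

variable {R M : Type*} [CommRing R] [AddCommGroup M] [Module R M] {p : Ideal R}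

lemma mem_associatedPrimes_quotient_iff [IsNoetherianRing R] {N : Submodule R M} :
    p ∈ associatedPrimes R (M ⧸ N) ↔ p.IsPrime ∧ ∃ m : M, ∀ a, a ∈ p ↔ a • m ∈ N := by
  rw [AssociatedPrimes.mem_iff, isAssociatedPrime_iff, (Submodule.mkQ_surjective N).exists]
  simp only [SetLike.ext_iff, Submodule.mem_colon_singleton, Submodule.mem_bot,
    Submodule.mkQ_apply, ← Submodule.Quotient.mk_smul, Submodule.Quotient.mk_eq_zero]

lemma exists_notMem_smul_mem_of_notMem_associatedPrimes [IsNoetherianRing R] [p.IsPrime]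
    {N : Submodule R M} (hp : p ∉ associatedPrimes R (M ⧸ N)) {m : M}
    (hm : ∀ a ∈ p, a • m ∈ N) : ∃ s ∉ p, s • m ∈ N := by
  contrapose! hp
  exact mem_associatedPrimes_quotient_iff.mpr
    ⟨inferInstance, m, fun a ↦ ⟨hm a, fun ha ↦ by_contra fun hap ↦ hp a hap ha⟩⟩

lemma exists_mem_isSMulRegular_of_forall_not_le [IsNoetherianRing R] [Module.Finite R M]
    {I : Ideal R} (hI : ∀ q ∈ associatedPrimes R M, ¬ I ≤ q) : ∃ x ∈ I, IsSMulRegular M x := by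
  by_contra! hreg
  have hsub : (I : Set R) ⊆ ⋃ q ∈ associatedPrimes R M, (q : Set R) := by
    rw [biUnion_associatedPrimes_eq_compl_regular]
    exact hreg
  obtain ⟨q, hq, hIq⟩ := (Ideal.subset_union_prime_finite (associatedPrimes.finite R M)
    (f := id) 0 0 fun _ hq _ _ ↦ hq.1).mp hsub
  exact hI q hq hIq

lemma exists_notMem_forall_smul_eq_zero [Module.Finite R M] [hp : p.IsPrime]
    (h : ∀ m : M, ∃ s ∉ p, s • m = 0) : ∃ s ∉ p, ∀ m : M, s • m = 0 := by
  have hsupp : (⟨p, hp⟩ : PrimeSpectrum R) ∉ Module.support R M :=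
    Module.notMem_support_iff'.mpr h
  rw [Module.mem_support_iff_of_finite, SetLike.not_le_iff_exists] at hsupp
  obtain ⟨s, hs, hsp⟩ := hsupp
  exact ⟨s, hsp, Module.mem_annihilator.mp hs⟩

open Module.associatedPrimes in
lemma maximalIdeal_mem_associatedPrimes_iff [IsNoetherianRing R] [p.IsPrime] {M' : Type*}
    [AddCommGroup M'] [Module R M'] [Module (Localization.AtPrime p) M']
    [IsScalarTower R (Localization.AtPrime p) M'] (f : M →ₗ[R] M')
    [IsLocalizedModule p.primeCompl f] :
    maximalIdeal (Localization.AtPrime p) ∈ associatedPrimes (Localization.AtPrime p) M' ↔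
      p ∈ associatedPrimes R M := by
  rw [← preimage_comap_associatedPrimes_eq_associatedPrimes_of_isLocalizedModule p.primeCompl
    (Localization.AtPrime p) f, Set.mem_preimage, ← Ideal.under_def,
    Localization.AtPrime.under_maximalIdeal]

lemma localized'_smul_top {R' M' : Type*} [CommRing R'] [Algebra R R'] [AddCommGroup M']
    [Module R M'] [Module R' M'] [IsScalarTower R R' M'] (S : Submonoid R) [IsLocalization S R']
    (f : M →ₗ[R] M') [IsLocalizedModule S f] (x : R) :
    (x • ⊤ : Submodule R M).localized' R' S f = algebraMap R R' x • (⊤ : Submodule R' M') := by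
  rw [← Submodule.ideal_span_singleton_smul, Submodule.localized'_smul, Submodule.localized'_top,
    Ideal.span, Submodule.localized'_span, Set.image_singleton, Algebra.linearMap_apply,
    ← Ideal.span, Submodule.ideal_span_singleton_smul]

lemma maximalIdeal_mem_associatedPrimes_quotSMulTop_iff [IsNoetherianRing R] [p.IsPrime] (x : R) :
    maximalIdeal (Localization.AtPrime p) ∈ associatedPrimes (Localization.AtPrime p)
        (QuotSMulTop (algebraMap R (Localization.AtPrime p) x) (Localization.AtPrime p)) ↔
      p ∈ associatedPrimes R (QuotSMulTop x R) := by
  unfold QuotSMulTop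
  rw [← localized'_smul_top p.primeCompl (Algebra.linearMap R (Localization.AtPrime p))]
  exact maximalIdeal_mem_associatedPrimes_iff (Submodule.toLocalizedQuotient' ..)

-- Depth two does not depend on the first parameter: a witness `a` of `p ∈ Ass (M ⧸ d M)` gives
-- `x • a = d • u` and `y • a = d • v`, hence `y • u = x • v`, so that `x ∣ u` and `d ∣ a`.
lemma notMem_associatedPrimes_quotSMulTop_of_isWeaklyRegular [IsNoetherianRing R] {x y d : R}
    (hxy : IsWeaklyRegular M [x, y]) (hx : x ∈ p) (hy : y ∈ p) (hd : IsSMulRegular M d) :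
    p ∉ associatedPrimes R (QuotSMulTop d M) := by
  rw [isWeaklyRegular_cons_iff, isWeaklyRegular_singleton_iff,
    isSMulRegular_quotient_iff_mem_of_smul_mem] at hxy
  obtain ⟨hxreg, hyreg⟩ := hxy
  rw [mem_associatedPrimes_quotient_iff]
  rintro ⟨hp, a, ha⟩
  obtain ⟨u, -, hu : d • u = x • a⟩ := (ha x).mp hx
  obtain ⟨v, -, hv : d • v = y • a⟩ := (ha y).mp hy
  have hyu : y • u = x • v := hd <| by
    simp only [smul_comm d, hu, hv, smul_comm x y]
  obtain ⟨w, -, rfl : x • w = u⟩ := hyreg u (hyu ▸ Submodule.smul_mem_pointwise_smul _ _ _ trivial)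
  have hdw : d • w = a := hxreg <| by simp only [← hu, smul_comm x d]
  refine hp.one_notMem ((ha 1).mpr ?_)
  rw [one_smul, ← hdw]
  exact Submodule.smul_mem_pointwise_smul _ _ _ trivial

lemma comap_mem_associatedPrimes_quotSMulTop {S : Type*} [CommRing S] [Algebra R S]
    [IsNoetherianRing R] [IsNoetherianRing S] {q : Ideal S} {x : R}
    (hq : q ∈ associatedPrimes S (QuotSMulTop (algebraMap R S x) S)) :
    q.comap (algebraMap R S) ∈ associatedPrimes R (QuotSMulTop x S) := by
  rw [mem_associatedPrimes_quotient_iff] at hq ⊢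
  obtain ⟨hprime, b, hb⟩ := hq
  refine ⟨hprime.comap _, b, fun a ↦ ?_⟩
  rw [Ideal.mem_comap, hb]
  simp only [Submodule.mem_smul_pointwise_iff_exists, Submodule.mem_top, true_and, algebraMap_smul]

lemma associatedPrimes_quotSMulTop_subset [IsNoetherianRing R] {N : Submodule R M} {x : R}
    (hx : Function.Bijective (x • · : M → M)) :
    associatedPrimes R (QuotSMulTop x N) ⊆ associatedPrimes R (M ⧸ N) := by
  intro p hp
  rw [mem_associatedPrimes_quotient_iff] at hp ⊢
  obtain ⟨hprime, n, hn⟩ := hp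
  obtain ⟨m, hm : x • m = n⟩ := hx.surjective n
  refine ⟨hprime, m, fun a ↦ (hn a).trans ⟨?_, fun ha ↦ ?_⟩⟩
  · rintro ⟨c, -, hc : x • c = a • n⟩
    have hcm : (c : M) = a • m := hx.injective <| by
      simp only [smul_comm x a, hm, ← Submodule.coe_smul, hc]
    exact hcm ▸ c.2
  · have hxa : a • n = x • (⟨a • m, ha⟩ : N) := Subtype.ext <| by
      simp only [Submodule.coe_smul, ← hm, smul_comm x a]
    exact hxa ▸ Submodule.smul_mem_pointwise_smul _ _ _ trivial

lemma exists_mem_associatedPrimes_quotSMulTop (K : Type*) [CommRing K] [Algebra R K]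
    [IsFractionRing R K] [IsNoetherianRing R]
    (hp : p ∈ associatedPrimes R (K ⧸ (1 : Submodule R K))) :
    ∃ d ∈ R⁰, p ∈ associatedPrimes R (QuotSMulTop d R) := by
  simp only [mem_associatedPrimes_quotient_iff] at hp ⊢
  obtain ⟨hprime, z, hz⟩ := hp
  obtain ⟨⟨r, d⟩, hrd : z * algebraMap R K d = algebraMap R K r⟩ := IsLocalization.surj R⁰ z
  refine ⟨d, d.2, hprime, r, fun a ↦ (hz a).trans ?_⟩
  simp only [Submodule.mem_one, Submodule.mem_smul_pointwise_iff_exists, Submodule.mem_top,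
    true_and, smul_eq_mul]
  refine exists_congr fun b ↦ ?_
  rw [← (IsFractionRing.injective R K).eq_iff, map_mul, map_mul, ← hrd, Algebra.smul_def,
    mul_comm z, mul_left_comm, (IsLocalization.map_units K d).mul_right_inj]

end AssociatedPrimes

lemma isSMulRegular_algebraMap_localizationAtPrime {R : Type*} [CommRing R] (q : Ideal R)
    [q.IsPrime] {x : R} (hx : x ∈ R⁰) :
    IsSMulRegular (Localization.AtPrime q) (algebraMap R (Localization.AtPrime q) x) :=
  Module.Flat.isSMulRegular_of_nonZeroDivisors
    (IsLocalization.map_nonZeroDivisors_le q.primeCompl _ ⟨x, hx, rfl⟩)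

lemma algebraMap_mem_nonZeroDivisors_of_subalgebra {R K : Type*} [CommRing R] [CommRing K]
    [Algebra R K] [IsFractionRing R K] (S : Subalgebra R K) {x : R} (hx : x ∈ R⁰) :
    algebraMap R S x ∈ S⁰ :=
  mem_nonZeroDivisors_of_injective (f := S.val) Subtype.val_injective
    (IsLocalization.map_units K ⟨x, hx⟩).mem_nonZeroDivisors

section Depth

/-- The condition `depth R ≥ n` on a local ring, in the form in which it occurs in `SerreS2`: some
`R`-regular sequence in the maximal ideal has length exactly `n`. -/
def DepthAtLeast (R : Type*) [CommRing R] [IsLocalRing R] (n : ℕ) : Prop :=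
  ∃ rs : List R, rs.length = n ∧ (∀ r ∈ rs, r ∈ maximalIdeal R) ∧ IsRegular R rs

variable {R : Type*} [CommRing R] [IsLocalRing R]

lemma depthAtLeast_zero : DepthAtLeast R 0 :=
  ⟨[], rfl, by simp, IsRegular.nil R R⟩

lemma depthAtLeast_one_iff : DepthAtLeast R 1 ↔ ∃ x ∈ maximalIdeal R, IsSMulRegular R x := by
  constructor
  · rintro ⟨rs, hlen, hmem, hreg⟩
    obtain ⟨x, rfl⟩ := List.length_eq_one_iff.mp hlen
    exact ⟨x, hmem x (by simp), (isWeaklyRegular_singleton_iff R x).mp hreg.1⟩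
  · rintro ⟨x, hxm, hx⟩
    have hmem : ∀ r ∈ [x], r ∈ maximalIdeal R := by simpa using hxm
    exact ⟨[x], rfl, hmem, .of_isWeaklyRegular_of_mem_maximalIdeal R hmem
      ((isWeaklyRegular_singleton_iff R x).mpr hx)⟩

lemma exists_mem_maximalIdeal_isSMulRegular_iff [IsNoetherianRing R] {M : Type*} [AddCommGroup M]
    [Module R M] [Module.Finite R M] :
    (∃ x ∈ maximalIdeal R, IsSMulRegular M x) ↔ maximalIdeal R ∉ associatedPrimes R M := by
  constructor
  · rintro ⟨x, hxm, hx⟩ hass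
    have hzd : x ∈ ⋃ q ∈ associatedPrimes R M, (q : Set R) := Set.mem_biUnion hass hxm
    rw [biUnion_associatedPrimes_eq_compl_regular] at hzd
    exact hzd hx
  · refine fun hass ↦ exists_mem_isSMulRegular_of_forall_not_le fun q hq hle ↦ hass ?_
    rwa [(maximalIdeal.isMaximal R).eq_of_le hq.1.ne_top hle]

lemma DepthAtLeast.maximalIdeal_notMem_associatedPrimes [IsNoetherianRing R]
    (h : DepthAtLeast R 2) {x : R} (hx : IsSMulRegular R x) :
    maximalIdeal R ∉ associatedPrimes R (QuotSMulTop x R) := by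
  obtain ⟨rs, hlen, hmem, hreg⟩ := h
  obtain ⟨u, v, rfl⟩ := List.length_eq_two.mp hlen
  exact notMem_associatedPrimes_quotSMulTop_of_isWeaklyRegular hreg.1
    (hmem u (by simp)) (hmem v (by simp)) hx

lemma depthAtLeast_two_of_notMem_associatedPrimes [IsNoetherianRing R] {x : R}
    (hxm : x ∈ maximalIdeal R) (hx : IsSMulRegular R x)
    (hass : maximalIdeal R ∉ associatedPrimes R (QuotSMulTop x R)) : DepthAtLeast R 2 := by
  obtain ⟨y, hym, hy⟩ := exists_mem_maximalIdeal_isSMulRegular_iff.mpr hass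
  have hmem : ∀ r ∈ [x, y], r ∈ maximalIdeal R := by simpa using ⟨hxm, hym⟩
  exact ⟨[x, y], rfl, hmem, .of_isWeaklyRegular_of_mem_maximalIdeal R hmem
    (.cons hx ((isWeaklyRegular_singleton_iff _ y).mpr hy))⟩

end Depth

section Serre

variable {A : Type*} [CommRing A]

lemma serreS2_iff_height : SerreS2 A ↔ ∀ (p : Ideal A) [p.IsPrime] (n : ℕ), n ≤ 2 →
    (n : ℕ∞) ≤ p.height → DepthAtLeast (Localization.AtPrime p) n := by
  have hdim (p : Ideal A) [p.IsPrime] (n : ℕ) :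
      (n : WithBot ℕ∞) ≤ ringKrullDim (Localization.AtPrime p) ↔ (n : ℕ∞) ≤ p.height := by
    rw [IsLocalization.AtPrime.ringKrullDim_eq_height p]
    exact WithBot.coe_le_coe
  exact ⟨fun h p hp n hn hnp ↦ h ⟨p, hp⟩ n hn ((hdim p n).mpr hnp),
    fun h P n hn hnP ↦ h P.asIdeal n hn ((hdim P.asIdeal n).mp hnP)⟩

variable [IsNoetherianRing A] {p : Ideal A}

lemma SerreS2.height_eq_zero_of_mem_associatedPrimes (hA : SerreS2 A)
    (hp : p ∈ associatedPrimes A A) : p.height = 0 := by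
  have := hp.1
  by_contra hpos
  have hdepth : DepthAtLeast (Localization.AtPrime p) 1 :=
    serreS2_iff_height.mp hA p 1 one_le_two (by exact_mod_cast Order.one_le_iff_ne_zero.mpr hpos)
  rw [depthAtLeast_one_iff, exists_mem_maximalIdeal_isSMulRegular_iff,
    maximalIdeal_mem_associatedPrimes_iff (Algebra.linearMap A (Localization.AtPrime p))] at hdepth
  exact hdepth hp

lemma SerreS2.exists_mem_nonZeroDivisors (hA : SerreS2 A) (hp : p.height ≠ 0) :
    ∃ x ∈ p, x ∈ A⁰ := by
  obtain ⟨x, hxp, hx⟩ := exists_mem_isSMulRegular_of_forall_not_le (M := A) fun q hq hpq ↦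
    hp <| le_zero_iff.mp <|
      (Ideal.height_mono hpq).trans (hA.height_eq_zero_of_mem_associatedPrimes hq).le
  exact ⟨x, hxp, mem_nonZeroDivisors_iff_right.mpr fun y hy ↦
    isSMulRegular_iff_right_eq_zero_of_smul.mp hx y (by rwa [smul_eq_mul, mul_comm])⟩

lemma DepthAtLeast.notMem_associatedPrimes_quotient_one [p.IsPrime]
    (h : DepthAtLeast (Localization.AtPrime p) 2) (K : Type*) [CommRing K] [Algebra A K]
    [IsFractionRing A K] : p ∉ associatedPrimes A (K ⧸ (1 : Submodule A K)) := by
  intro hp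
  obtain ⟨d, hd, hpd⟩ := exists_mem_associatedPrimes_quotSMulTop K hp
  exact h.maximalIdeal_notMem_associatedPrimes (isSMulRegular_algebraMap_localizationAtPrime p hd)
    ((maximalIdeal_mem_associatedPrimes_quotSMulTop_iff d).mpr hpd)

end Serre

lemma height_le_height_comap_of_isIntegral (R : Type*) {S : Type*} [CommRing R] [CommRing S]
    [Algebra R S] [Algebra.IsIntegral R S] (q : Ideal S) [hq : q.IsPrime] :
    q.height ≤ (q.comap (algebraMap R S)).height := by
  have hmono : StrictMono (PrimeSpectrum.comap (algebraMap R S)) := fun _ _ hlt ↦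
    Ideal.IsIntegral.comap_lt_comap (R := R) hlt
  have := Order.height_le_height_apply_of_strictMono _ hmono ⟨q, hq⟩
  rwa [← PrimeSpectrum.height_eq_orderHeight, ← PrimeSpectrum.height_eq_orderHeight] at this

section EndIdeal

variable {A : Type*} [CommRing A] {J p : Ideal A}

lemma mem_endIdeal_iff {z : FractionRing A} :
    z ∈ endIdeal A J ↔ ∀ j ∈ J, ∃ i ∈ J, algebraMap A (FractionRing A) i = j • z := by
  simp only [Algebra.smul_def, mul_comm _ z]
  rfl

lemma finite_endIdeal [IsNoetherianRing A] (hJ : ∃ g ∈ J, g ∈ A⁰) :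
    Module.Finite A (endIdeal A J) := by
  obtain ⟨g, hgJ, hg⟩ := hJ
  let mulG : endIdeal A J →ₗ[A] (1 : Submodule A (FractionRing A)) :=
    (g • (endIdeal A J).val.toLinearMap).codRestrict _ fun z ↦
      let ⟨i, _, hi⟩ := mem_endIdeal_iff.mp z.2 g hgJ
      Submodule.mem_one.mpr ⟨i, hi⟩
  have : IsNoetherian A (1 : Submodule A (FractionRing A)) := by
    rw [Submodule.one_eq_range]; infer_instance
  refine Module.Finite.of_injective mulG fun z w hzw ↦ Subtype.ext ?_
  exact Module.Flat.isSMulRegular_of_nonZeroDivisors hg (congrArg Subtype.val hzw)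

lemma exists_notMem_forall_smul_mem_one [IsNoetherianRing A] [p.IsPrime]
    (hp : p ∉ associatedPrimes A (FractionRing A ⧸ (1 : Submodule A (FractionRing A))))
    {z : FractionRing A} (hz : ∀ a ∈ p, a • z ∈ endIdeal A J) :
    ∃ s ∉ p, ∀ j ∈ J, j • s • z ∈ (1 : Submodule A (FractionRing A)) := by
  let φ : J →ₗ[A] FractionRing A ⧸ (1 : Submodule A (FractionRing A)) :=
    (LinearMap.toSpanSingleton A _ (Submodule.Quotient.mk z)).comp J.subtype
  have hφ : ∀ y : LinearMap.range φ, ∃ s ∉ p, s • y = 0 := by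
    rintro ⟨_, ⟨j, hj⟩, rfl⟩
    obtain ⟨s, hsp, hs⟩ := exists_notMem_smul_mem_of_notMem_associatedPrimes hp (m := j • z)
      fun a ha ↦ by
        obtain ⟨i, -, hi⟩ := mem_endIdeal_iff.mp (hz a ha) j hj
        exact Submodule.mem_one.mpr ⟨i, hi.trans (smul_comm j a z)⟩
    exact ⟨s, hsp, Subtype.ext ((Submodule.Quotient.mk_eq_zero _).mpr hs)⟩
  obtain ⟨s, hsp, hs⟩ := exists_notMem_forall_smul_eq_zero (M := LinearMap.range φ) hφ
  refine ⟨s, hsp, fun j hj ↦ ?_⟩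
  rw [smul_comm, ← Submodule.Quotient.mk_eq_zero]
  exact congrArg Subtype.val (hs ⟨_, ⟨j, hj⟩, rfl⟩)

lemma mem_endIdeal_of_isRadical (hJ : J.IsRadical) {z : FractionRing A}
    (hz : ∀ j ∈ J, ∃ a, algebraMap A (FractionRing A) a = j • z ∧ a • z ∈ endIdeal A J) :
    z ∈ endIdeal A J := by
  refine mem_endIdeal_iff.mpr fun j hj ↦ ?_
  obtain ⟨a, ha, haz⟩ := hz j hj
  obtain ⟨i, hi, hia⟩ := mem_endIdeal_iff.mp haz j hj
  have hsq : a ^ 2 = i := IsFractionRing.injective A (FractionRing A) <| by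
    rw [hia, smul_comm, ← ha, pow_two, map_mul, Algebra.smul_def]
  exact ⟨a, hJ ⟨2, hsq ▸ hi⟩, ha⟩

lemma notMem_associatedPrimes_quotient_endIdeal [IsNoetherianRing A] (hJ : J.IsRadical)
    (hp : p ∉ associatedPrimes A (FractionRing A ⧸ (1 : Submodule A (FractionRing A)))) :
    p ∉ associatedPrimes A (FractionRing A ⧸ Subalgebra.toSubmodule (endIdeal A J)) := by
  rw [mem_associatedPrimes_quotient_iff]
  rintro ⟨hprime, z, hz⟩
  simp only [Subalgebra.mem_toSubmodule] at hz
  obtain ⟨s, hsp, hs⟩ := exists_notMem_forall_smul_mem_one hp fun a ha ↦ (hz a).mp ha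
  have hw (a : A) : a ∈ p ↔ a • s • z ∈ endIdeal A J := by
    rw [smul_smul, ← hz, hprime.mul_mem_iff_mem_or_mem, or_iff_left hsp]
  generalize s • z = w at hs hw
  suffices w ∈ endIdeal A J from hprime.one_notMem ((hw 1).mpr (by rwa [one_smul]))
  refine mem_endIdeal_of_isRadical hJ fun j hj ↦ ?_
  obtain ⟨a, ha⟩ := Submodule.mem_one.mp (hs j hj)
  refine ⟨a, ha, (hw a).mp (by_contra fun hap ↦ ?_)⟩
  have hpaw : ∀ b ∈ p, b • a • w ∈ (1 : Submodule A (FractionRing A)) := fun b hb ↦ by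
    obtain ⟨i, hi, hib⟩ := mem_endIdeal_iff.mp ((hw b).mp hb) j hj
    have hiw : b • a • w = i • w := by
      rw [smul_smul, Algebra.smul_def, map_mul, ha, Algebra.smul_def i, hib, smul_comm j b w,
        Algebra.smul_def b]
    exact hiw ▸ hs i hi
  obtain ⟨t, htp, ht⟩ := exists_notMem_smul_mem_of_notMem_associatedPrimes hp hpaw
  obtain ⟨c, hc⟩ := Submodule.mem_one.mp ht
  have hta : t * a ∈ p := (hw _).mpr <| by
    rw [mul_smul, ← hc]
    exact (endIdeal A J).algebraMap_mem c
  exact (hprime.mem_or_mem hta).elim htp hap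

end EndIdeal

theorem endIdeal_satisfies_S2_general (A : Type*) [CommRing A] [IsNoetherianRing A]
    (hA : SerreS2 A) (J : Ideal A) (hrad : J.IsRadical) (hnzd : ∃ g ∈ J, g ∈ A⁰) :
    SerreS2 (endIdeal A J) := by
  have : Module.Finite A (endIdeal A J) := finite_endIdeal hnzd
  have : IsNoetherianRing (endIdeal A J) := .of_finite A (endIdeal A J)
  refine serreS2_iff_height.mpr fun q hq n hn hnq ↦ ?_
  set p := q.comap (algebraMap A (endIdeal A J))
  have hnp : n ≤ p.height := hnq.trans (height_le_height_comap_of_isIntegral A q)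
  obtain rfl | hn0 := eq_or_ne n 0
  · exact depthAtLeast_zero
  obtain ⟨x, hxp, hx⟩ := hA.exists_mem_nonZeroDivisors (p := p) fun h0 ↦ hn0 <| by
    simpa only [h0, Nat.cast_eq_zero, nonpos_iff_eq_zero] using hnp
  have hxq := (IsLocalization.AtPrime.to_map_mem_maximal_iff (Localization.AtPrime q) q
    (algebraMap A (endIdeal A J) x)).mpr hxp
  have hxreg := isSMulRegular_algebraMap_localizationAtPrime q
    (algebraMap_mem_nonZeroDivisors_of_subalgebra (endIdeal A J) hx)
  obtain rfl | rfl : n = 1 ∨ n = 2 := by omega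
  · exact depthAtLeast_one_iff.mpr ⟨_, hxq, hxreg⟩
  refine depthAtLeast_two_of_notMem_associatedPrimes hxq hxreg fun hass ↦ ?_
  have hpass : p ∈ associatedPrimes A (QuotSMulTop x (endIdeal A J)) :=
    comap_mem_associatedPrimes_quotSMulTop
      ((maximalIdeal_mem_associatedPrimes_quotSMulTop_iff _).mp hass)
  exact notMem_associatedPrimes_quotient_endIdeal hrad
    ((serreS2_iff_height.mp hA p 2 le_rfl hnp).notMem_associatedPrimes_quotient_one _)
    (associatedPrimes_quotSMulTop_subset (IsLocalization.smul_bijective _ (⟨x, hx⟩ : A⁰)) hpass)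

/-- Let `A` be a reduced Noetherian ring satisfying `(S₂)` and let
`J ⊆ A` be a radical ideal containing a non-zerodivisor. Then the ring
`End_A(J) = {x ∈ Q(A) : x·J ⊆ J}` satisfies `(S₂)` as well. -/
theorem endIdeal_satisfies_S2
    (A : Type*) [CommRing A] [IsReduced A] [IsNoetherianRing A]
    (hA : SerreS2 A) (J : Ideal A) (hrad : J.IsRadical)
    (hnzd : ∃ g ∈ J, g ∈ A⁰) :
    SerreS2 (endIdeal A J) :=
  endIdeal_satisfies_S2_general A hA J hrad hnzd
end
end

section
/- Let A be a reduced Noetherian commutative ring satisfying Serre's condition (S_2), and let J ⊆ A be a radical ideal containing a non-zerodivisor of A. If the localization A_P is a regular local ring for every associated prime P of A/J with height P = 1, then End_A(J) = A, i.e., every x ∈ Q(A) with x·J ⊆ J lies in A. -/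
set_option synthInstance.maxHeartbeats 1000000
set_option maxHeartbeats 1000000

open scoped nonZeroDivisors

noncomputable section

/-- A Noetherian local ring is regular if its maximal ideal can be generated by
Krull-dimension-many elements. -/
def IsRegularLocal (R : Type*) [CommRing R] [IsLocalRing R] : Prop :=
  IsNoetherianRing R ∧ ∃ s : Finset R,
    Ideal.span (s : Set R) = IsLocalRing.maximalIdeal R ∧
      (s.card : WithBot ℕ∞) = ringKrullDim R

/-!
Write `x ∈ End_A(J)` as `k / g`, so that `kJ ⊆ gJ`; we must show `k ∈ gA`. This may be checked after
localizing at the associated primes `P` of `A / gA`. By `(S₂)` these have height at most one, since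
two elements of a regular sequence in `P A_P` cannot both multiply an element outside `g A_P` into
`g A_P`. At a prime of height at most one, `J A_P` is principal: it is either the unit ideal or,
`J` being radical and of positive height, the maximal ideal of a discrete valuation ring. Its
generator is a non-zerodivisor and can be cancelled from `k J A_P ⊆ g J A_P`.
-/

section CommRing

open scoped Pointwise

variable {R : Type*} [CommRing R]

theorem dvd_of_dvd_mul_of_isWeaklyRegular_pair {g k a b : R} (hg : g ∈ R⁰)
    (hab : RingTheory.Sequence.IsWeaklyRegular R [a, b])
    (ha : g ∣ a * k) (hb : g ∣ b * k) : g ∣ k := by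
  rw [RingTheory.Sequence.isWeaklyRegular_cons_iff,
    RingTheory.Sequence.isWeaklyRegular_singleton_iff] at hab
  obtain ⟨a_regular, b_regular⟩ := hab
  obtain ⟨u, hu⟩ := ha
  obtain ⟨v, hv⟩ := hb
  have hbu : b * u = a * v :=
    (mul_cancel_left_mem_nonZeroDivisors hg).mp (by linear_combination a * hv - b * hu)
  have u_mem : u ∈ a • (⊤ : Submodule R R) := by
    refine mem_of_isSMulRegular_quotient_of_smul_mem b_regular ?_
    rw [smul_eq_mul, hbu]
    exact Submodule.smul_mem_pointwise_smul v a ⊤ Submodule.mem_top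
  obtain ⟨w, -, rfl⟩ := (Submodule.mem_smul_pointwise_iff_exists _ _ _).mp u_mem
  refine ⟨w, a_regular ?_⟩
  simp only [smul_eq_mul] at hu ⊢
  linear_combination hu

theorem dvd_of_span_singleton_mul_le_span_singleton_mul {g k r : R} {I : Ideal R}
    (hI : I.IsPrincipal) (hrI : r ∈ I) (hr : r ∈ R⁰)
    (hle : Ideal.span {k} * I ≤ Ideal.span {g} * I) : g ∣ k := by
  obtain ⟨t, rfl⟩ := hI
  obtain ⟨c, rfl⟩ := Ideal.mem_span_singleton.mp hrI
  have ht : t ∈ R⁰ := (mul_mem_nonZeroDivisors.mp hr).1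
  rw [Ideal.submodule_span_eq, Ideal.span_singleton_mul_span_singleton,
    Ideal.span_singleton_mul_span_singleton, Ideal.span_singleton_le_span_singleton] at hle
  exact (dvd_cancel_right_mem_nonZeroDivisors ht).mp hle

end CommRing

theorem IsRegularLocal.isPrincipal_maximalIdeal {R : Type*} [CommRing R] [IsLocalRing R]
    (hR : IsRegularLocal R) (hdim : ringKrullDim R = 1) :
    (IsLocalRing.maximalIdeal R).IsPrincipal := by
  obtain ⟨-, s, hs, hcard⟩ := hR
  have hcard_one : s.card = 1 := by exact_mod_cast hcard.trans hdim
  obtain ⟨t, rfl⟩ := Finset.card_eq_one.mp hcard_one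
  exact ⟨t, by rw [← hs, Finset.coe_singleton, Ideal.submodule_span_eq]⟩

section Localization

variable {A : Type*} [CommRing A]

theorem map_colon_singleton_of_isLocalization (M : Submonoid A) {S : Type*} [CommRing S]
    [Algebra A S] [IsLocalization M S] (I : Ideal A) (c : A) :
    (I.colon {c}).map (algebraMap A S) = (I.map (algebraMap A S)).colon {algebraMap A S c} := by
  ext y
  obtain ⟨d, s, rfl⟩ := IsLocalization.exists_mk'_eq M y
  have hmul : IsLocalization.mk' S d s * algebraMap A S c = IsLocalization.mk' S (d * c) s := by
    rw [mul_comm, IsLocalization.mul_mk'_eq_mk'_of_mul, mul_comm]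
  simp only [Submodule.mem_colon_singleton, smul_eq_mul, hmul,
    IsLocalization.mk'_mem_map_algebraMap_iff M, mul_assoc]

theorem map_eq_maximalIdeal_of_isRadical_of_mem_minimalPrimes {J P : Ideal A} [P.IsPrime]
    (hJ : J.IsRadical) (hP : P ∈ J.minimalPrimes) :
    J.map (algebraMap A (Localization.AtPrime P)) =
      IsLocalRing.maximalIdeal (Localization.AtPrime P) := by
  rw [← hJ.radical, IsLocalization.map_radical P.primeCompl,
    IsLocalization.AtPrime.radical_map_of_mem_minimalPrimes _ P J hP,
    Localization.AtPrime.map_eq_maximalIdeal]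

variable [IsNoetherianRing A]

theorem mem_of_forall_associatedPrimes_algebraMap_mem {I : Ideal A} {k : A}
    (hk : ∀ P : PrimeSpectrum A, P.asIdeal ∈ associatedPrimes A (A ⧸ I) →
      algebraMap A (Localization.AtPrime P.asIdeal) k ∈
        I.map (algebraMap A (Localization.AtPrime P.asIdeal))) :
    k ∈ I := by
  by_contra hkI
  obtain ⟨P, hP, hle⟩ := exists_le_isAssociatedPrime_of_isNoetherianRing A
    (Ideal.Quotient.mk I k) (mt Ideal.Quotient.eq_zero_iff_mem.mp hkI)
  have := hP.isPrime
  obtain ⟨s, hsP, hsk⟩ :=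
    (IsLocalization.algebraMap_mem_map_algebraMap_iff P.primeCompl _ I k).mp (hk ⟨P, this⟩ hP)
  refine hsP (hle ?_)
  rw [Submodule.mem_colon_singleton, Submodule.mem_bot]
  exact Ideal.Quotient.eq_zero_iff_mem.mpr hsk

theorem exists_maximalIdeal_eq_colon_of_mem_associatedPrimes {I P : Ideal A} [P.IsPrime]
    (hP : P ∈ associatedPrimes A (A ⧸ I)) :
    ∃ c : Localization.AtPrime P, IsLocalRing.maximalIdeal (Localization.AtPrime P) =
      (I.map (algebraMap A (Localization.AtPrime P))).colon {c} := by
  obtain ⟨-, c', hc'⟩ := isAssociatedPrime_iff.mp hP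
  obtain ⟨c, rfl⟩ := Ideal.Quotient.mk_surjective c'
  have hPc : P = I.colon {c} := by
    ext d
    rw [hc', Submodule.mem_colon_singleton, Submodule.mem_bot, Submodule.mem_colon_singleton]
    exact Ideal.Quotient.eq_zero_iff_mem
  refine ⟨algebraMap A _ c, ?_⟩
  rw [← map_colon_singleton_of_isLocalization P.primeCompl, ← hPc,
    Localization.AtPrime.map_eq_maximalIdeal]

theorem SerreS2.height_le_one_of_mem_associatedPrimes (hA : SerreS2 A) {g : A} (hg : g ∈ A⁰)
    {P : Ideal A} [P.IsPrime] (hP : P ∈ associatedPrimes A (A ⧸ Ideal.span {g})) :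
    P.height ≤ 1 := by
  set f := algebraMap A (Localization.AtPrime P)
  obtain ⟨c, hc⟩ := exists_maximalIdeal_eq_colon_of_mem_associatedPrimes hP
  have mem_maximalIdeal_iff (a) :
      a ∈ IsLocalRing.maximalIdeal (Localization.AtPrime P) ↔ f g ∣ a * c := by
    rw [hc, Submodule.mem_colon_singleton, Ideal.map_span, Set.image_singleton,
      Ideal.mem_span_singleton, smul_eq_mul]
  have hfg : f g ∈ (Localization.AtPrime P)⁰ :=
    IsLocalization.map_nonZeroDivisors_le P.primeCompl _ ⟨g, hg, rfl⟩
  by_contra! hheight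
  have two_le_dim : ((2 : ℕ) : WithBot ℕ∞) ≤ ringKrullDim (Localization.AtPrime P) := by
    rw [IsLocalization.AtPrime.ringKrullDim_eq_height P]
    exact WithBot.coe_le_coe.mpr (Order.add_one_le_of_lt hheight)
  obtain ⟨rs, hlen, hmem, hreg⟩ := hA ⟨P, ‹_›⟩ 2 le_rfl two_le_dim
  obtain ⟨a, b, rfl⟩ := List.length_eq_two.mp hlen
  have hdvd : f g ∣ 1 * c := by
    rw [one_mul]
    exact dvd_of_dvd_mul_of_isWeaklyRegular_pair hfg hreg.toIsWeaklyRegular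
      ((mem_maximalIdeal_iff a).mp (hmem a (by simp)))
      ((mem_maximalIdeal_iff b).mp (hmem b (by simp)))
  exact Ideal.IsPrime.one_notMem inferInstance ((mem_maximalIdeal_iff 1).mpr hdvd)

theorem isPrincipal_map_of_height_le_one {J : Ideal A} (hrad : J.IsRadical)
    (hheight : 1 ≤ J.height)
    (hreg : ∀ P : PrimeSpectrum A, P.asIdeal ∈ associatedPrimes A (A ⧸ J) →
      ringKrullDim (Localization.AtPrime P.asIdeal) = 1 →
      IsRegularLocal (Localization.AtPrime P.asIdeal))
    {P : Ideal A} [P.IsPrime] (hP : P.height ≤ 1) :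
    (J.map (algebraMap A (Localization.AtPrime P))).IsPrincipal := by
  by_cases hJP : J ≤ P
  · have hPmin : P ∈ J.minimalPrimes :=
      Ideal.mem_minimalPrimes_of_height_le hJP (hP.trans hheight)
    have hPass : P ∈ associatedPrimes A (A ⧸ J) :=
      Module.associatedPrimes.minimalPrimes_annihilator_subset_associatedPrimes A (A ⧸ J)
        (by rwa [Ideal.annihilator_quotient])
    have hdim : ringKrullDim (Localization.AtPrime P) = 1 := by
      rw [IsLocalization.AtPrime.ringKrullDim_eq_height P,
        hP.antisymm (hheight.trans (Ideal.height_mono hJP))]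
      rfl
    rw [map_eq_maximalIdeal_of_isRadical_of_mem_minimalPrimes hrad hPmin]
    exact (hreg ⟨P, ‹_›⟩ hPass hdim).isPrincipal_maximalIdeal hdim
  · rw [IsLocalization.AtPrime.map_eq_top_of_not_le _ hJP]
    exact top_isPrincipal

end Localization

theorem mk'_mem_endIdeal_iff {A : Type*} [CommRing A] {J : Ideal A} {k : A} {g : A⁰} :
    IsLocalization.mk' (FractionRing A) k g ∈ endIdeal A J ↔
      Ideal.span {k} * J ≤ Ideal.span {(g : A)} * J := by
  rw [Ideal.span_singleton_mul_le_span_singleton_mul]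
  refine forall₂_congr fun j _ ↦ exists_congr fun j' ↦ and_congr_right fun _ ↦ ?_
  rw [mul_comm, IsLocalization.mul_mk'_eq_mk'_of_mul, IsLocalization.eq_mk'_iff_mul_eq, ← map_mul,
    (IsFractionRing.injective A (FractionRing A)).eq_iff, mul_comm j', mul_comm j, eq_comm]

theorem endIdeal_eq_self_of_regular_in_height_one_general
    (A : Type*) [CommRing A] [IsNoetherianRing A]
    (hA : SerreS2 A) (J : Ideal A) (hrad : J.IsRadical)
    (hnzd : ∃ g ∈ J, g ∈ A⁰)
    (hreg : ∀ P : PrimeSpectrum A, P.asIdeal ∈ associatedPrimes A (A ⧸ J) →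
      ringKrullDim (Localization.AtPrime P.asIdeal) = 1 →
      IsRegularLocal (Localization.AtPrime P.asIdeal)) :
    endIdeal A J = ⊥ := by
  obtain ⟨r, hrJ, hr⟩ := hnzd
  have hheight : 1 ≤ J.height :=
    (Ideal.one_le_height_span_singleton_of_mem_nonZeroDivisors hr).trans
      (Ideal.height_mono (J.span_singleton_le_iff_mem.mpr hrJ))
  refine eq_bot_iff.mpr fun x hx ↦ ?_
  obtain ⟨k, g, rfl⟩ := IsLocalization.exists_mk'_eq A⁰ x
  have hle := mk'_mem_endIdeal_iff.mp hx
  suffices hk : k ∈ Ideal.span {(g : A)} by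
    obtain ⟨w, rfl⟩ := Ideal.mem_span_singleton.mp hk
    exact Algebra.mem_bot.mpr ⟨w, (IsLocalization.mk'_mul_cancel_left w g).symm⟩
  refine mem_of_forall_associatedPrimes_algebraMap_mem fun P hP ↦ ?_
  have hprincipal := isPrincipal_map_of_height_le_one hrad hheight hreg
    (hA.height_le_one_of_mem_associatedPrimes g.2 hP)
  have hle_map := Ideal.map_mono (f := algebraMap A (Localization.AtPrime P.asIdeal)) hle
  simp only [Ideal.map_mul, Ideal.map_span, Set.image_singleton] at hle_map ⊢
  exact Ideal.mem_span_singleton.mpr <|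
    dvd_of_span_singleton_mul_le_span_singleton_mul hprincipal (Ideal.mem_map_of_mem _ hrJ)
      (IsLocalization.map_nonZeroDivisors_le P.asIdeal.primeCompl _ ⟨r, hr, rfl⟩) hle_map

/-- Let `A` be a reduced Noetherian ring satisfying `(S₂)` and let
`J ⊆ A` be a radical ideal containing a non-zerodivisor. If `A_P` is regular for
every associated prime `P` of `A/J` of height one, then `End_A(J) = A`. -/
theorem endIdeal_eq_self_of_regular_in_height_one
    (A : Type*) [CommRing A] [IsReduced A] [IsNoetherianRing A]
    (hA : SerreS2 A) (J : Ideal A) (hrad : J.IsRadical)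
    (hnzd : ∃ g ∈ J, g ∈ A⁰)
    (hreg : ∀ P : PrimeSpectrum A, P.asIdeal ∈ associatedPrimes A (A ⧸ J) →
      ringKrullDim (Localization.AtPrime P.asIdeal) = 1 →
      IsRegularLocal (Localization.AtPrime P.asIdeal)) :
    endIdeal A J = ⊥ :=
  endIdeal_eq_self_of_regular_in_height_one_general A hA J hrad hnzd hreg
end
end
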